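/- Let q be a prime power, let n be a positive divisor of q²−1, set n₂ = n/gcd(n, q+1), and let t be an integer with 1 ≤ t ≤ (q−1)/n₂ − 1. Then for every integer k with 1 ≤ k ≤ ⌊((t+1)n + q)/(q+1)⌋ there exists an MDS Hermitian self-orthogonal [(t+1)n + 1, k]_{q²} code. -/

import Mathlib

/-!
The code is a generalized Reed–Solomon code `{(vᵢ f(xᵢ))ᵢ : deg f < k}`. Its Hermitian form is
`∑ᵢ vᵢ^(q+1) (f g^q)(xᵢ)`, and `f g^q` has degree at most `N - 2`, where `N` is the length. Lagrange
interpolation gives `∑ᵢ h(xᵢ) / P'(xᵢ) = 0` for every `h` of degree at most `N - 2`, where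
`P = ∏ᵢ (X - xᵢ)`. So it suffices that `vᵢ^(q+1) = 1 / P'(xᵢ)`, and since the norm `v ↦ v^(q+1)`
maps onto `𝔽_q^*`, such `vᵢ` exist as soon as every `P'(xᵢ)` lies in `𝔽_q`.

Take `P = X · Q(X^n)`, where `Q = ∏_{b ∈ B} (X - b)` for a set `B ⊆ 𝔽_q^*` of `n`-th powers in
`𝔽_{q²}`. At a zero `x` of `P` the value `y = x^n` is `0` or in `B`, hence in `𝔽_q`, and so is
`P'(x) = Q(y) + n y Q'(y)`. The `n`-th powers in `𝔽_q^*` form a group of order `(q-1)/n₂`,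
which leaves room for `t + 1` of them.
-/

open scoped BigOperators

/-- A linear code `C ⊆ 𝔽_{q²}ⁿ` is Hermitian self-orthogonal if
`⟨c,c'⟩_H = ∑ i, c i * (c' i)^q = 0` for all codewords `c, c'`. -/
def IsHermSelfOrth (q : ℕ) {F : Type*} [Field F] {n : ℕ}
    (C : Submodule F (Fin n → F)) : Prop :=
  ∀ c ∈ C, ∀ c' ∈ C, ∑ i, c i * (c' i) ^ q = 0

/-- The minimum Hamming distance of the code `C` equals `d`. -/
def MinDistEq {F : Type*} [Field F] {n : ℕ}
    (C : Submodule F (Fin n → F)) (d : ℕ) : Prop :=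
  (∀ c ∈ C, c ≠ 0 → d ≤ Set.ncard {i | c i ≠ 0}) ∧
  (∃ c ∈ C, c ≠ 0 ∧ Set.ncard {i | c i ≠ 0} = d)

open Polynomial Lagrange

section GeneralizedReedSolomon

variable {F ι : Type*} [Field F]

/-- The linear map sending a polynomial `f` to the word `(vᵢ f(xᵢ))ᵢ`, the encoder of the
generalized Reed–Solomon codes with evaluation points `xᵢ` and column multipliers `vᵢ`. -/
noncomputable def grsEval (x v : ι → F) : F[X] →ₗ[F] ι → F :=
  LinearMap.pi fun i => v i • leval (x i)

/-- The generalized Reed–Solomon code `{(vᵢ f(xᵢ))ᵢ : deg f < k}`. The definition makes sense for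
arbitrary `x` and `v`; it is the usual code when `x` is injective and no `vᵢ` vanishes. -/
noncomputable def grsCode (x v : ι → F) (k : ℕ) : Submodule F (ι → F) :=
  (degreeLT F k).map (grsEval x v)

variable {x v : ι → F} {k : ℕ}

lemma grsEval_apply (f : F[X]) (i : ι) : grsEval x v f i = v i * f.eval (x i) := rfl

lemma ncard_eval_eq_zero_le_natDegree (hx : Function.Injective x) {f : F[X]} (hf : f ≠ 0) :
    {i | f.eval (x i) = 0}.ncard ≤ f.natDegree :=
  calc {i | f.eval (x i) = 0}.ncard ≤ (f.rootSet F).ncard :=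
        Set.ncard_le_ncard_of_injOn x (fun i hi => mem_rootSet.2 ⟨hf, by simpa using hi⟩) hx.injOn
          (f.rootSet_finite F)
    _ ≤ f.natDegree := ncard_rootSet_le f F

variable [Fintype ι]

lemma ncard_grsEval_ne_zero_add_ncard_eval_eq_zero (hv : ∀ i, v i ≠ 0) (f : F[X]) :
    {i | grsEval x v f i ≠ 0}.ncard + {i | f.eval (x i) = 0}.ncard = Fintype.card ι := by
  have hcompl : {i | grsEval x v f i ≠ 0} = {i | f.eval (x i) = 0}ᶜ := by
    ext i
    simp [grsEval_apply, hv i]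
  rw [hcompl, add_comm, Set.ncard_add_ncard_compl, Nat.card_eq_fintype_card]

lemma card_lt_ncard_grsEval_ne_zero_add (hx : Function.Injective x) (hv : ∀ i, v i ≠ 0)
    {f : F[X]} (hf : f ∈ degreeLT F k) (hf0 : f ≠ 0) :
    Fintype.card ι < {i | grsEval x v f i ≠ 0}.ncard + k := by
  have hdeg : f.natDegree < k := (natDegree_lt_iff_degree_lt hf0).2 (mem_degreeLT.1 hf)
  have hroots := ncard_eval_eq_zero_le_natDegree hx hf0
  have hsum := ncard_grsEval_ne_zero_add_ncard_eval_eq_zero (x := x) hv f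
  lia

lemma finrank_grsCode (hx : Function.Injective x) (hv : ∀ i, v i ≠ 0) (hk : k ≤ Fintype.card ι) :
    Module.finrank F (grsCode x v k) = k := by
  have hinj : Function.Injective ((grsEval x v).domRestrict (degreeLT F k)) := by
    refine (injective_iff_map_eq_zero _).2 fun ⟨f, hf⟩ hzero => ?_
    by_contra hf0
    have hweight := card_lt_ncard_grsEval_ne_zero_add hx hv hf fun h => hf0 (Subtype.ext h)
    have hcode : grsEval x v f = 0 := hzero
    simp only [hcode, Pi.zero_apply, ne_eq, not_true_eq_false, Set.ofPred_false, Set.ncard_empty,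
      zero_add] at hweight
    exact hk.not_gt hweight
  rw [grsCode, ← LinearMap.range_domRestrict, LinearMap.finrank_range_of_inj hinj,
    (degreeLTEquiv F k).finrank_eq, Module.finrank_fin_fun]

lemma exists_mem_grsCode_ncard_eq (hx : Function.Injective x) (hv : ∀ i, v i ≠ 0) (hk1 : 1 ≤ k)
    (hk : k ≤ Fintype.card ι) :
    ∃ c ∈ grsCode x v k, {i | c i ≠ 0}.ncard = Fintype.card ι - k + 1 := by
  obtain ⟨T, -, hT⟩ := Finset.exists_subset_card_eq (s := (Finset.univ : Finset ι)) (n := k - 1)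
    (by rw [Finset.card_univ]; lia)
  have hdeg : nodal T x ∈ degreeLT F k := by
    rw [mem_degreeLT, degree_nodal, hT]
    exact_mod_cast Nat.sub_lt hk1 one_pos
  have hzeros : {i | (nodal T x).eval (x i) = 0} = T := by
    ext i
    simp [eval_nodal, Finset.prod_eq_zero_iff, sub_eq_zero, hx.eq_iff]
  refine ⟨_, Submodule.mem_map_of_mem hdeg, ?_⟩
  have hsum := ncard_grsEval_ne_zero_add_ncard_eval_eq_zero (x := x) hv (nodal T x)
  rw [hzeros, Set.ncard_coe_finset, hT] at hsum
  lia

lemma minDistEq_grsCode {N : ℕ} {x v : Fin N → F} (hx : Function.Injective x)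
    (hv : ∀ i, v i ≠ 0) (hk1 : 1 ≤ k) (hk : k ≤ N) :
    MinDistEq (grsCode x v k) (N - k + 1) := by
  constructor
  · rintro _ ⟨f, hf, rfl⟩ hc
    have hf0 : f ≠ 0 := by
      rintro rfl
      exact hc (map_zero _)
    have hweight := card_lt_ncard_grsEval_ne_zero_add hx hv hf hf0
    rw [Fintype.card_fin] at hweight
    lia
  · obtain ⟨c, hc, hweight⟩ := exists_mem_grsCode_ncard_eq hx hv hk1 (by simpa using hk)
    rw [Fintype.card_fin] at hweight
    refine ⟨c, hc, ?_, hweight⟩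
    rintro rfl
    simp at hweight

end GeneralizedReedSolomon

section SelfOrthogonality

lemma natDegree_lt_of_mem_degreeLT {R : Type*} [Semiring R] {k : ℕ} {f : R[X]} (hk : 0 < k)
    (hf : f ∈ degreeLT R k) : f.natDegree < k := by
  rcases eq_or_ne f 0 with rfl | hf0
  · simpa using hk
  · exact (natDegree_lt_iff_degree_lt hf0).2 (mem_degreeLT.1 hf)

variable {F : Type*} [Field F]

lemma sum_nodalWeight_mul_eval_eq_zero {ι : Type*} [DecidableEq ι] {s : Finset ι} {x : ι → F}
    (hx : Set.InjOn x s) {f : F[X]} (hf : f.natDegree + 1 < s.card) :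
    ∑ i ∈ s, nodalWeight s x i * f.eval (x i) = 0 := by
  have hdeg : f.degree < s.card :=
    degree_le_natDegree.trans_lt (by exact_mod_cast (Nat.lt_succ_self _).trans hf)
  calc ∑ i ∈ s, nodalWeight s x i * f.eval (x i)
      = ∑ i ∈ s, f.eval (x i) / ∏ j ∈ s.erase i, (x i - x j) :=
        Finset.sum_congr rfl fun i _ => by
          rw [nodalWeight, Finset.prod_inv_distrib, div_eq_inv_mul]
    _ = f.coeff (s.card - 1) := (coeff_eq_sum hx hdeg).symm
    _ = 0 := coeff_eq_zero_of_natDegree_lt (by lia)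

lemma isHermSelfOrth_grsCode {q k N : ℕ} {x v : Fin N → F} (hx : Function.Injective x)
    (hv : ∀ i, v i ^ (q + 1) = nodalWeight Finset.univ x i) (hk1 : 1 ≤ k)
    (hk : (q + 1) * k < N + q) :
    IsHermSelfOrth q (grsCode x v k) := by
  rintro _ ⟨f, hf, rfl⟩ _ ⟨g, hg, rfl⟩
  have hdeg : (f * g ^ q).natDegree + 1 < N := by
    have hf' := natDegree_lt_of_mem_degreeLT hk1 hf
    have hg' := natDegree_lt_of_mem_degreeLT hk1 hg
    have hmul : (f * g ^ q).natDegree ≤ f.natDegree + q * g.natDegree :=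
      natDegree_mul_le.trans (Nat.add_le_add_left natDegree_pow_le _)
    nlinarith [Nat.mul_le_mul_left q hg']
  calc ∑ i, grsEval x v f i * grsEval x v g i ^ q
      = ∑ i, nodalWeight Finset.univ x i * (f * g ^ q).eval (x i) :=
        Finset.sum_congr rfl fun i _ => by
          rw [grsEval_apply, grsEval_apply, ← hv i, eval_mul, eval_pow]
          ring
    _ = 0 := sum_nodalWeight_mul_eval_eq_zero hx.injOn (by simpa using hdeg)

end SelfOrthogonality

section FiniteField

lemma range_powMonoidHom_eq_ker {G : Type*} [CommGroup G] [IsCyclic G] [Finite G] {d e : ℕ}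
    (h : d * e = Nat.card G) : (powMonoidHom d : G →* G).range = (powMonoidHom e).ker := by
  refine Subgroup.eq_of_le_of_card_ge ?_ (le_of_eq ?_)
  · rintro _ ⟨g, rfl⟩
    rw [MonoidHom.mem_ker, powMonoidHom_apply, powMonoidHom_apply, ← pow_mul, h, pow_card_eq_one']
  · have hd : 0 < d := Nat.pos_of_ne_zero (by rintro rfl; simp [Nat.card_pos.ne] at h)
    rw [IsCyclic.card_powMonoidHom_range, IsCyclic.card_powMonoidHom_ker, ← h,
      Nat.gcd_mul_left_left, Nat.gcd_mul_right_left, Nat.mul_div_cancel_left _ hd]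

lemma sq_sub_one_eq_mul (q : ℕ) : q ^ 2 - 1 = (q + 1) * (q - 1) := by
  simpa using Nat.sq_sub_sq q 1

variable {F : Type*} [Field F] [Fintype F]

lemma exists_pow_succ_eq_of_pow_eq_self {q : ℕ} (hF : Fintype.card F = q ^ 2) {u : F}
    (hu : u ≠ 0) (huq : u ^ q = u) : ∃ v : F, v ^ (q + 1) = u := by
  have hq : q ≠ 0 := by
    rintro rfl
    simp [Fintype.card_ne_zero] at hF
  have hcard : (q + 1) * (q - 1) = Nat.card Fˣ := by
    rw [Nat.card_units, Nat.card_eq_fintype_card, hF, sq_sub_one_eq_mul]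
  have hpow : u ^ (q - 1) = 1 :=
    mul_right_cancel₀ hu (by rw [pow_sub_one_mul hq, huq, one_mul])
  have hker : Units.mk0 u hu ∈ (powMonoidHom (q - 1) : Fˣ →* Fˣ).ker := by
    ext
    simpa using hpow
  rw [← range_powMonoidHom_eq_ker hcard] at hker
  obtain ⟨w, hw⟩ := hker
  exact ⟨w, by simpa using congrArg Units.val hw⟩

lemma exists_isPrimitiveRoot_of_dvd_card_sub_one {c : ℕ} (hc : c ∣ Fintype.card F - 1) :
    ∃ ζ : F, IsPrimitiveRoot ζ c := by
  obtain ⟨g, hg⟩ := IsCyclic.exists_ofOrder_eq_natCard (α := Fˣ)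
  rw [Nat.card_units, Nat.card_eq_fintype_card] at hg
  obtain ⟨d, hd⟩ := hc
  have hpos : 0 < Fintype.card F - 1 := Nat.sub_pos_of_lt Fintype.one_lt_card
  exact ⟨_, (IsPrimitiveRoot.coe_units_iff.2 (hg ▸ IsPrimitiveRoot.orderOf g)).pow hpos
    (hd.trans (mul_comm c d))⟩

lemma exists_finset_card_eq_forall_pow_eq_one {c m : ℕ} (hc : c ∣ Fintype.card F - 1)
    (hm : m ≤ c) : ∃ B : Finset F, B.card = m ∧ ∀ b ∈ B, b ^ c = 1 := by
  obtain ⟨ζ, hζ⟩ := exists_isPrimitiveRoot_of_dvd_card_sub_one hc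
  have hcpos : 0 < c := Nat.pos_of_dvd_of_pos hc (Nat.sub_pos_of_lt Fintype.one_lt_card)
  obtain ⟨B, hB, hcard⟩ := Finset.exists_subset_card_eq (hm.trans_eq hζ.card_nthRootsFinset.symm)
  exact ⟨B, hcard, fun b hb => (mem_nthRootsFinset hcpos 1).1 (hB hb)⟩

lemma exists_ringHom_forall_eq_pow {q m : ℕ} (hq : IsPrimePow q)
    (hF : Fintype.card F = q ^ m) : ∃ φ : F →+* F, ∀ y, φ y = y ^ q := by
  obtain ⟨p, r, hp, -, rfl⟩ := (isPrimePow_nat_iff q).1 hq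
  have : Fact p.Prime := ⟨hp⟩
  have : CharP F p := charP_of_card_eq_prime_pow (f := r * m) (by rw [hF, pow_mul])
  exact ⟨iterateFrobenius F p r, fun y => iterateFrobenius_def p r y⟩

lemma exists_nodal_eq_of_dvd_X_pow_card_sub_X {P : F[X]} (hP : P.Monic)
    (hdvd : P ∣ X ^ Fintype.card F - X) {N : ℕ} (hN : P.natDegree = N) :
    ∃ x : Fin N → F, Function.Injective x ∧ nodal Finset.univ x = P := by
  classical
  have hne : (X ^ Fintype.card F - X : F[X]) ≠ 0 :=
    FiniteField.X_pow_card_sub_X_ne_zero F Fintype.one_lt_card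
  have hsplits : P.Splits := by
    refine Splits.of_dvd (splits_iff_card_roots.2 ?_) hne hdvd
    rw [FiniteField.roots_X_pow_card_sub_X, Finset.card_val, Finset.card_univ,
      FiniteField.X_pow_card_sub_X_natDegree_eq F Fintype.one_lt_card]
  have hnodup : P.roots.Nodup := by
    refine Multiset.nodup_of_le (roots.le_of_dvd hne hdvd) ?_
    rw [FiniteField.roots_X_pow_card_sub_X]
    exact Finset.univ.nodup
  have hcard : P.roots.toFinset.card = N := by
    rw [Multiset.toFinset_card_of_nodup hnodup, ← hsplits.natDegree_eq_card_roots, hN]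
  let e := P.roots.toFinset.equivFinOfCardEq hcard
  refine ⟨fun i => e.symm i, Subtype.val_injective.comp e.symm.injective, ?_⟩
  calc ∏ i, (X - C (e.symm i : F)) = ∏ a : P.roots.toFinset, (X - C (a : F)) :=
        e.symm.prod_comp fun a => X - C (a : F)
    _ = ∏ a ∈ P.roots.toFinset, (X - C a) := Finset.prod_coe_sort _ fun a => X - C a
    _ = (P.roots.map fun a => X - C a).prod := by
        rw [Finset.prod, Multiset.toFinset_val, hnodup.dedup]
    _ = P := (hsplits.eq_prod_roots_of_monic hP).symm

lemma exists_mds_isHermSelfOrth_of_dvd_X_pow_card_sub_X {q k N : ℕ}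
    (hF : Fintype.card F = q ^ 2) {P : F[X]} (hP : P.Monic) (hdvd : P ∣ X ^ Fintype.card F - X)
    (hN : P.natDegree = N)
    (hfix : ∀ a, P.IsRoot a → P.derivative.eval a ^ q = P.derivative.eval a)
    (hk1 : 1 ≤ k) (hk : (q + 1) * k < N + q) :
    ∃ C : Submodule F (Fin N → F),
      Module.finrank F C = k ∧ IsHermSelfOrth q C ∧ MinDistEq C (N - k + 1) := by
  obtain ⟨x, hx, hnodal⟩ := exists_nodal_eq_of_dvd_X_pow_card_sub_X hP hdvd hN
  have hweight0 : ∀ i, nodalWeight Finset.univ x i ≠ 0 := fun i =>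
    nodalWeight_ne_zero hx.injOn (Finset.mem_univ i)
  have hweight : ∀ i, nodalWeight Finset.univ x i ^ q = nodalWeight Finset.univ x i := by
    intro i
    have hroot : P.IsRoot (x i) := hnodal ▸ eval_nodal_at_node (Finset.mem_univ i)
    rw [nodalWeight_eq_eval_derivative_nodal (Finset.mem_univ i), hnodal, inv_pow, hfix _ hroot]
  choose v hv using fun i => exists_pow_succ_eq_of_pow_eq_self hF (hweight0 i) (hweight i)
  have hv0 : ∀ i, v i ≠ 0 := fun i h => hweight0 i (by rw [← hv i, h, zero_pow q.succ_ne_zero])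
  have hkN : k ≤ N := by nlinarith
  exact ⟨grsCode x v k, finrank_grsCode hx hv0 (by simpa using hkN),
    isHermSelfOrth_grsCode hx hv hk1 hk, minDistEq_grsCode hx hv0 hk1 hkN⟩

end FiniteField

section CosetPolynomial

lemma map_eval_eq_of_map_eq {R : Type*} [CommSemiring R] {φ : R →+* R} {p : R[X]} {y : R}
    (hp : p.map φ = p) (hy : φ y = y) : φ (p.eval y) = p.eval y := by
  rw [← eval_map_apply, hp, hy]

variable {R : Type*} [CommRing R] {n : ℕ}

/-- The monic polynomial `X · ∏_{b ∈ B} (X^n - b)`. When `B` consists of nonzero `n`-th powers, its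
zero set is the union of `{0}` and the `|B|` cosets `{x | x^n = b}` of the group `U_n` of `n`-th
roots of unity: the set of evaluation points of the code. -/
noncomputable def cosetPoly (n : ℕ) (B : Finset R) : R[X] :=
  X * expand R n (nodal B id)

lemma monic_cosetPoly (hn : 0 < n) (B : Finset R) : (cosetPoly n B).Monic :=
  monic_X.mul (nodal_monic.expand hn)

lemma natDegree_cosetPoly [Nontrivial R] (hn : 0 < n) (B : Finset R) :
    (cosetPoly n B).natDegree = B.card * n + 1 := by
  rw [cosetPoly, monic_X.natDegree_mul (nodal_monic.expand hn), natDegree_X, natDegree_expand,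
    natDegree_nodal, add_comm]

lemma eval_derivative_cosetPoly (B : Finset R) (a : R) :
    (cosetPoly n B).derivative.eval a =
      (nodal B id).eval (a ^ n) + n * a ^ n * (nodal B id).derivative.eval (a ^ n) := by
  have hpow : a * (n * a ^ (n - 1)) = n * a ^ n := by
    rcases eq_or_ne n 0 with rfl | hn
    · simp
    · rw [← mul_pow_sub_one hn a, mul_left_comm]
  rw [cosetPoly, derivative_mul, derivative_X, derivative_expand, ← hpow]
  simp only [eval_add, eval_mul, eval_X, eval_one, expand_eval, eval_natCast, eval_pow]
  ring

lemma map_eval_derivative_cosetPoly_eq [IsDomain R] {φ : R →+* R} {B : Finset R}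
    (hB : ∀ b ∈ B, φ b = b) {a : R} (ha : (cosetPoly n B).IsRoot a) :
    φ ((cosetPoly n B).derivative.eval a) = (cosetPoly n B).derivative.eval a := by
  have hy : φ (a ^ n) = a ^ n := by
    rw [IsRoot, cosetPoly, eval_mul, eval_X, expand_eval, mul_eq_zero] at ha
    rcases ha with rfl | ha
    · rw [map_pow, map_zero]
    · rw [eval_nodal, Finset.prod_eq_zero_iff] at ha
      obtain ⟨b, hb, hab⟩ := ha
      rw [sub_eq_zero.1 hab]
      exact hB b hb
  have hQ : (nodal B id).map φ = nodal B id := by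
    simp only [nodal_eq, Polynomial.map_prod, Polynomial.map_sub, map_X, map_C, id_eq]
    exact Finset.prod_congr rfl fun b hb => by rw [hB b hb]
  have hQ' : (nodal B id).derivative.map φ = (nodal B id).derivative := by
    rw [← derivative_map, hQ]
  rw [eval_derivative_cosetPoly, map_add, map_mul, map_mul, map_natCast, hy,
    map_eval_eq_of_map_eq hQ hy, map_eval_eq_of_map_eq hQ' hy]

variable {F : Type*} [Field F] {B : Finset F}

lemma nodal_dvd_X_pow_sub_one {m : ℕ} (hB : ∀ b ∈ B, b ^ m = 1) :
    nodal B id ∣ (X ^ m - 1 : F[X]) := by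
  refine Finset.prod_dvd_of_coprime (fun a _ b _ hab => ?_) fun b hb => ?_
  · exact isCoprime_X_sub_C_of_isUnit_sub (sub_ne_zero.2 hab).isUnit
  · rw [dvd_iff_isRoot]
    simp [hB b hb]

lemma cosetPoly_dvd_X_pow_sub_X {m : ℕ} (hB : ∀ b ∈ B, b ^ m = 1) :
    cosetPoly n B ∣ X ^ (n * m + 1) - X := by
  have hexpand : (X ^ (n * m + 1) - X : F[X]) = X * expand F n (X ^ m - 1) := by
    rw [map_sub, map_pow, expand_X, map_one, mul_sub, mul_one, pow_succ', pow_mul]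
  have hdvd := map_dvd (expand F n) (nodal_dvd_X_pow_sub_one hB)
  rw [hexpand, cosetPoly]
  exact mul_dvd_mul_left X hdvd

lemma exists_mds_isHermSelfOrth_of_forall_pow_eq [Fintype F] {q k m : ℕ} (hq : IsPrimePow q)
    (hF : Fintype.card F = q ^ 2) (hnm : n * m = q ^ 2 - 1) (hBm : ∀ b ∈ B, b ^ m = 1)
    (hBq : ∀ b ∈ B, b ^ q = b) (hk1 : 1 ≤ k) (hk : (q + 1) * k < B.card * n + 1 + q) :
    ∃ C : Submodule F (Fin (B.card * n + 1) → F),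
      Module.finrank F C = k ∧ IsHermSelfOrth q C ∧ MinDistEq C (B.card * n + 1 - k + 1) := by
  obtain ⟨φ, hφ⟩ := exists_ringHom_forall_eq_pow hq hF
  have hcard : n * m + 1 = Fintype.card F := by
    rw [hnm, hF, Nat.sub_add_cancel (Nat.pow_pos hq.pos)]
  have hn : 0 < n := by
    refine Nat.pos_of_ne_zero ?_
    rintro rfl
    simpa [← hcard] using Fintype.one_lt_card (α := F)
  refine exists_mds_isHermSelfOrth_of_dvd_X_pow_card_sub_X hF (monic_cosetPoly hn B)
    (hcard ▸ cosetPoly_dvd_X_pow_sub_X hBm) (natDegree_cosetPoly hn B) (fun a ha => ?_) hk1 hk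
  rw [← hφ]
  exact map_eval_derivative_cosetPoly_eq (fun b hb => (hφ b).trans (hBq b hb)) ha

end CosetPolynomial

lemma div_gcd_dvd_of_dvd_mul {n a b : ℕ} (hn : 0 < n) (h : n ∣ a * b) : n / n.gcd a ∣ b :=
  (Nat.div_dvd_iff_dvd_mul (n.gcd_dvd_left a) (Nat.gcd_pos_of_pos_left a hn)).2
    (Nat.dvd_gcd_mul_iff_dvd_mul.2 h)

lemma mul_div_div_gcd_dvd_of_dvd_mul {n a b : ℕ} (hn : 0 < n) (h : n ∣ a * b) :
    n * (b / (n / n.gcd a)) ∣ a * b := by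
  have hmul : n * (b / (n / n.gcd a)) = n.gcd a * b :=
    calc n * (b / (n / n.gcd a)) = n.gcd a * (n / n.gcd a) * (b / (n / n.gcd a)) := by
          rw [Nat.mul_div_cancel' (n.gcd_dvd_left a)]
      _ = n.gcd a * b := by rw [mul_assoc, Nat.mul_div_cancel' (div_gcd_dvd_of_dvd_mul hn h)]
  exact hmul ▸ Nat.mul_dvd_mul_right (n.gcd_dvd_right a) b

/-- Multi-coset construction: for `n ∣ q²−1`, `n₂ = n/gcd(n,q+1)`,
`1 ≤ t ≤ (q−1)/n₂ − 1` and `1 ≤ k ≤ ⌊((t+1)n+q)/(q+1)⌋`, there exists an MDS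
Hermitian self-orthogonal `[(t+1)n+1, k]_{q²}` code. -/
theorem stmt10 (q n : ℕ) (hq : IsPrimePow q) (hn : 0 < n)
    (hdvd : n ∣ q ^ 2 - 1)
    (t : ℕ) (ht1 : 1 ≤ t) (ht2 : t ≤ (q - 1) / (n / Nat.gcd n (q + 1)) - 1)
    (k : ℕ) (hk1 : 1 ≤ k) (hk2 : k ≤ ((t + 1) * n + q) / (q + 1))
    (F : Type*) [Field F] [Fintype F] (hF : Fintype.card F = q ^ 2) :
    ∃ C : Submodule F (Fin ((t + 1) * n + 1) → F),
      Module.finrank F C = k ∧ IsHermSelfOrth q C ∧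
      MinDistEq C ((t + 1) * n + 1 - k + 1) := by
  rw [sq_sub_one_eq_mul] at hdvd
  set c := (q - 1) / (n / n.gcd (q + 1))
  have hcq : c ∣ q - 1 := Nat.div_dvd_of_dvd (div_gcd_dvd_of_dvd_mul hn hdvd)
  obtain ⟨d, hd⟩ : n * c ∣ q ^ 2 - 1 :=
    sq_sub_one_eq_mul q ▸ mul_div_div_gcd_dvd_of_dvd_mul hn hdvd
  have hcF : c ∣ Fintype.card F - 1 := by
    rw [hF, sq_sub_one_eq_mul]
    exact hcq.mul_left _
  obtain ⟨B, hcard, hBc⟩ :=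
    exists_finset_card_eq_forall_pow_eq_one hcF (show t + 1 ≤ c by lia)
  have hBm : ∀ b ∈ B, b ^ (c * d) = 1 := fun b hb => by rw [pow_mul, hBc b hb, one_pow]
  have hBq : ∀ b ∈ B, b ^ q = b := fun b hb => by
    have hb1 : b ^ (q - 1) = 1 :=
      orderOf_dvd_iff_pow_eq_one.1 ((orderOf_dvd_of_pow_eq_one (hBc b hb)).trans hcq)
    rw [← pow_sub_one_mul hq.ne_zero b, hb1, one_mul]
  have hk : (q + 1) * k < (t + 1) * n + 1 + q := by
    have := (Nat.le_div_iff_mul_le q.succ_pos).1 hk2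
    lia
  rw [← hcard] at hk ⊢
  exact exists_mds_isHermSelfOrth_of_forall_pow_eq hq hF (by rw [hd, mul_assoc]) hBm hBq hk1 hk
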